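/- Consider the 1-D periodic reduced problem γ_t = d∫₀^{M+L} k_*(x-y)γ⁺(t,y)dy - dγ⁺(t,x) on (0, M+L) with γ(0,·) = c₀ := ‖γ₀‖ on [0,M] and γ(0,·) = -ℓ₀ on (M, M+L), where k_* ≥ 0 with ∫₀^{M+L} k_* = 1. Then for every T > 0, the measure of the set Σ̃₁(T) ∩ (M, M+L), where Σ̃₁(T) = {x : γ(T,x) ≥ 0}, satisfies |Σ̃₁(T) ∩ (M, M+L)| ≤ (c₀/ℓ₀) M. In particular, if L > (c₀/ℓ₀) M then the total positivity set ⋃_{t≥0} Σ̃₁(t) ∩ (0, M+L) has measure strictly less than M+L. -/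

import Mathlib

open MeasureTheory Filter

/-!
A solution can turn from negative to nonnegative but never back, so on `S = {γ(T) ≥ 0}` the positive
part `γ⁺(t)`, `t ≤ T`, carries all its mass. Because the kernel has unit columns, the inflow into
`S` is then at most the outflow from `S`, and `∫_S γ` decreases in time. With `A = {γ(0) ≥ 0}`,
`0 ≤ ∫_S γ(T) ≤ ∫_S γ(0) ≤ c₀ |A| - ℓ₀ |S \ A|`.

Integrating in time needs `γ ≤ c₀`, which has to be proved without knowing in advance that `γ` is
bounded or that the inflow integral converges. The factor `exp (d t)` absorbs the outflow and makes
`U = exp (d t) γ⁺` nondecreasing in `t`. The inflow of `U` could then decrease only by falling to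
the value `0` that a divergent integral takes; as derivatives have the Darboux property, it is
nondecreasing too. Hence on the positivity set `U(τ + η)` is at least `d η` times the inflow at `τ`,
and feeding this back into Duhamel's formula `n` times gives
`U(t) ≤ c₀ exp (d t) + (t / η)ⁿ / n! U(t + n η)`. With `n η = 2 e t` fixed, the last term is at most
`2⁻ⁿ U(t + 2 e t)`, which tends to `0`.
-/

open Set Real Function

lemma nonneg_of_hasDerivAt_nonneg_of_neg {f f' : ℝ → ℝ} {a b : ℝ} (hab : a ≤ b)
    (hf : ContinuousOn f (Icc a b)) (hderiv : ∀ t ∈ Ioo a b, HasDerivAt f (f' t) t)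
    (hf' : ∀ t ∈ Ioo a b, f t < 0 → 0 ≤ f' t) (ha : 0 ≤ f a) : 0 ≤ f b := by
  have hcompact : IsCompact (Icc a b ∩ f ⁻¹' Ici 0) :=
    isCompact_Icc.of_isClosed_subset (hf.preimage_isClosed_of_isClosed isClosed_Icc isClosed_Ici)
      inter_subset_left
  obtain ⟨r, ⟨hr, hfr⟩, hlast⟩ := hcompact.exists_isGreatest ⟨a, left_mem_Icc.2 hab, ha⟩
  have hneg : ∀ t ∈ Ioo r b, f t < 0 := fun t ht ↦ by
    by_contra! hft
    exact ht.1.not_ge (hlast ⟨⟨hr.1.trans ht.1.le, ht.2.le⟩, hft⟩)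
  have hsub : Ioo r b ⊆ Ioo a b := Ioo_subset_Ioo_left hr.1
  have hmono : MonotoneOn f (Icc r b) := by
    refine monotoneOn_of_hasDerivWithinAt_nonneg (convex_Icc r b) (f' := f')
      (hf.mono (Icc_subset_Icc_left hr.1)) ?_ ?_ <;> rw [interior_Icc]
    · exact fun t ht ↦ (hderiv t (hsub ht)).hasDerivWithinAt
    · exact fun t ht ↦ hf' t (hsub ht) (hneg t ht)
  exact le_trans hfr (hmono (left_mem_Icc.2 hr.2) (right_mem_Icc.2 hr.2) hr.2)

lemma abs_sub_le_of_abs_hasDerivAt_le {f f' : ℝ → ℝ} {a b B : ℝ} (hab : a ≤ b)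
    (hf : ContinuousOn f (Icc a b)) (hderiv : ∀ t ∈ Ioo a b, HasDerivAt f (f' t) t)
    (hB : ∀ t ∈ Ioo a b, |f' t| ≤ B) : |f b - f a| ≤ B * (b - a) := by
  rcases hab.eq_or_lt with rfl | hlt
  · simp
  obtain ⟨t, ht, hslope⟩ := exists_hasDerivAt_eq_slope f f' hlt hf hderiv
  have hpos : 0 < b - a := sub_pos.2 hlt
  have habs : |f b - f a| / (b - a) ≤ B := by
    simpa only [hslope, abs_div, abs_of_pos hpos] using hB t ht
  exact (div_le_iff₀ hpos).1 habs

-- Subtracting a primitive of `c` reduces this to Darboux's theorem for `a`.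
lemma exists_eq_of_hasDerivAt_add {f a c : ℝ → ℝ} {s t m : ℝ} (hst : s ≤ t)
    (hc : ContinuousOn c (Icc s t)) (hf : ∀ r ∈ Icc s t, HasDerivAt f (a r + c r) r)
    (hs : m < a s) (ht : a t < m) : ∃ r ∈ Ioo s t, a r = m := by
  have hC : Continuous (IccExtend hst ((Icc s t).domRestrict c)) := hc.domRestrict.Icc_extend'
  refine exists_hasDerivWithinAt_eq_of_lt_of_gt
    (f := fun r ↦ f r - ∫ u in s..r, IccExtend hst ((Icc s t).domRestrict c) u) hst
    (fun r hr ↦ ?_) hs ht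
  have hprimitive := (hC.integral_hasStrictDerivAt s r).hasDerivAt
  rw [IccExtend_of_mem hst _ hr] at hprimitive
  exact (((hf r hr).sub hprimitive).congr_deriv (add_sub_cancel_right ..)).hasDerivWithinAt

lemma monotoneOn_of_hasDerivAt_add {f a c : ℝ → ℝ} {D : Set ℝ} (hD : D.OrdConnected)
    (hc : ContinuousOn c D) (hf : ∀ t ∈ D, HasDerivAt f (a t + c t) t)
    (hdrop : ∀ s ∈ D, ∀ t ∈ D, s ≤ t → a s ≤ a t ∨ a t = 0) : MonotoneOn a D := by
  intro s hs t ht hst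
  by_contra! hlt
  have hzero : a t = 0 := (hdrop s hs t ht hst).resolve_left hlt.not_ge
  have hsub := hD.out hs ht
  obtain ⟨r, hr, har⟩ := exists_eq_of_hasDerivAt_add (m := a s / 2) hst (hc.mono hsub)
    (fun r hr ↦ hf r (hsub hr)) (by linarith) (by linarith)
  rcases hdrop s hs r (hsub (Ioo_subset_Icc_self hr)) hr.1.le with h | h <;> linarith

lemma hasDerivAt_pow_succ_div_factorial (n : ℕ) (t : ℝ) :
    HasDerivAt (fun r : ℝ ↦ r ^ (n + 1) / (n + 1).factorial) (t ^ n / n.factorial) t := by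
  refine ((hasDerivAt_pow (n + 1) t).div_const _).congr_deriv ?_
  rw [Nat.factorial_succ, Nat.add_sub_cancel]
  push_cast
  field_simp

lemma natCast_mul_pow_div_factorial_le (n : ℕ) {r : ℝ} (hr : 0 ≤ r) :
    (n * r) ^ n / n.factorial ≤ (exp 1 * r) ^ n := by
  have h : (n : ℝ) ^ n / n.factorial ≤ exp 1 ^ n := by
    simpa [← exp_nat_mul] using pow_div_factorial_le_exp (n : ℝ) n.cast_nonneg n
  calc (n * r) ^ n / n.factorial = (n : ℝ) ^ n / n.factorial * r ^ n := by ring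
    _ ≤ exp 1 ^ n * r ^ n := by gcongr
    _ = (exp 1 * r) ^ n := (mul_pow ..).symm

section Integral

variable {X : Type*} [MeasurableSpace X] {ν : Measure X} [IsFiniteMeasure ν]

lemma integral_le_integral_of_integral_hasDerivAt_nonpos {F F' : ℝ → X → ℝ} {a b B : ℝ}
    (hab : a ≤ b) (hF : ∀ t, AEStronglyMeasurable (F t) ν) (hFb : Integrable (F b) ν)
    (hcont : ∀ x, ContinuousOn (F · x) (Icc a b))
    (hderiv : ∀ t ∈ Ioo a b, ∀ x, HasDerivAt (F · x) (F' t x) t)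
    (hF' : ∀ t ∈ Ioo a b, AEStronglyMeasurable (F' t) ν)
    (hB : ∀ᵐ x ∂ν, ∀ t ∈ Ioo a b, |F' t x| ≤ B)
    (hnonpos : ∀ t ∈ Ioo a b, ∫ x, F' t x ∂ν ≤ 0) : ∫ x, F b x ∂ν ≤ ∫ x, F a x ∂ν := by
  have hbound : ∀ t ∈ Icc a b, ∀ᵐ x ∂ν, ‖F t x‖ ≤ |F b x| + |B| * (b - a) := by
    intro t ht
    filter_upwards [hB] with x hx
    have hsub : Ioo t b ⊆ Ioo a b := Ioo_subset_Ioo_left ht.1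
    have hlip : |F b x - F t x| ≤ |B| * (b - t) :=
      abs_sub_le_of_abs_hasDerivAt_le ht.2 ((hcont x).mono (Icc_subset_Icc_left ht.1))
        (fun r hr ↦ hderiv r (hsub hr) x) fun r hr ↦ (hx r (hsub hr)).trans (le_abs_self B)
    calc ‖F t x‖ ≤ |F b x| + |F b x - F t x| := by
          simpa using abs_sub (F b x) (F b x - F t x)
      _ ≤ |F b x| + |B| * (b - a) := by
          gcongr
          exact hlip.trans (by gcongr; exact ht.1)
  have hmajorant : Integrable (fun x ↦ |F b x| + |B| * (b - a)) ν :=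
    hFb.abs.add (integrable_const _)
  have hanti : AntitoneOn (fun t ↦ ∫ x, F t x ∂ν) (Icc a b) := by
    refine antitoneOn_of_hasDerivWithinAt_nonpos (convex_Icc a b)
      (f' := fun t ↦ ∫ x, F' t x ∂ν)
      (continuousOn_of_dominated (fun t _ ↦ hF t) hbound hmajorant (.of_forall hcont)) ?_ ?_ <;>
      rw [interior_Icc]
    · intro t ht
      have hFt : Integrable (F t) ν := hmajorant.mono' (hF t) (hbound t (Ioo_subset_Icc_self ht))
      exact (hasDerivAt_integral_of_dominated_loc_of_deriv_le (Ioo_mem_nhds ht.1 ht.2)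
        (.of_forall hF) hFt (hF' t ht) hB (integrable_const B)
        (.of_forall fun x t ht ↦ hderiv t ht x)).2.hasDerivWithinAt
    · exact hnonpos
  exact hanti (left_mem_Icc.2 hab) (right_mem_Icc.2 hab) hab

end Integral

section RescaledPosPart

variable {X : Type*} {d : ℝ} {γ : ℝ → X → ℝ}

/-- The positive part of `γ` multiplied by the integrating factor `exp (d * t)`, which absorbs the
outflow term of the reduced problem. -/
noncomputable def rescaledPosPart (d : ℝ) (γ : ℝ → X → ℝ) (t : ℝ) (x : X) : ℝ :=
  exp (d * t) * (γ t x)⁺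

lemma rescaledPosPart_nonneg (d : ℝ) (γ : ℝ → X → ℝ) (t : ℝ) (x : X) :
    0 ≤ rescaledPosPart d γ t x :=
  mul_nonneg (exp_pos _).le (posPart_nonneg _)

lemma rescaledPosPart_of_nonneg {t : ℝ} {x : X} (h : 0 ≤ γ t x) :
    rescaledPosPart d γ t x = exp (d * t) * γ t x := by
  rw [rescaledPosPart, posPart_of_nonneg h]

lemma rescaledPosPart_of_nonpos {t : ℝ} {x : X} (h : γ t x ≤ 0) :
    rescaledPosPart d γ t x = 0 := by
  rw [rescaledPosPart, posPart_of_nonpos h, mul_zero]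

end RescaledPosPart

/-- A doubly stochastic kernel density on `(X, μ)`: the continuous analogue of a doubly stochastic
matrix. Since the Bochner integral of a nonintegrable function is `0`, the normalizations include
the integrability of the rows and columns. -/
structure IsDoublyStochasticKernel {X : Type*} [MeasurableSpace X] (μ : Measure X)
    (k : X → X → ℝ) : Prop where
  nonneg : ∀ x y, 0 ≤ k x y
  measurable : Measurable (uncurry k)
  integral_row : ∀ x, ∫ y, k x y ∂μ = 1
  integral_column : ∀ y, ∫ x, k x y ∂μ = 1

/-- A solution for `t ≥ 0` of the reduced problem `γ_t = d ∫ k(x, y) γ⁺(t, y) dμ(y) - d γ⁺(t, x)`,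
the nonlocal evolution with diffusivity `d > 0` and dispersal kernel `k`. No integrability of `γ⁺`
is assumed: the inflow integral takes the value `0` wherever it diverges. -/
structure IsReducedSolution {X : Type*} [MeasurableSpace X] (μ : Measure X) (d : ℝ)
    (k : X → X → ℝ) (γ : ℝ → X → ℝ) : Prop where
  diffusivity_pos : 0 < d
  kernel : IsDoublyStochasticKernel μ k
  continuousOn : ∀ x, ContinuousOn (fun t ↦ γ t x) (Ici 0)
  measurable : ∀ t, Measurable (γ t)
  hasDerivAt : ∀ t > 0, ∀ x,
    HasDerivAt (fun s ↦ γ s x) (d * (∫ y, k x y * (γ t y)⁺ ∂μ) - d * (γ t x)⁺) t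

section

variable {X : Type*} [MeasurableSpace X] {μ : Measure X} {d : ℝ} {k : X → X → ℝ} {γ : ℝ → X → ℝ}

namespace IsDoublyStochasticKernel

lemma integrable_row (hk : IsDoublyStochasticKernel μ k) (x : X) : Integrable (k x) μ :=
  .of_integral_ne_zero (by simp [hk.integral_row x])

lemma integrable_column (hk : IsDoublyStochasticKernel μ k) (y : X) :
    Integrable (fun x ↦ k x y) μ :=
  .of_integral_ne_zero (by simp [hk.integral_column y])

lemma integral_mul_le_add (hk : IsDoublyStochasticKernel μ k) {u v : X → ℝ} {C ε : ℝ} {x : X}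
    (hu : ∀ y, 0 ≤ u y) (hv : Integrable (fun y ↦ k x y * v y) μ)
    (huv : ∀ y, u y ≤ C + ε * v y) :
    ∫ y, k x y * u y ∂μ ≤ C + ε * ∫ y, k x y * v y ∂μ := by
  have hconst : Integrable (fun y ↦ C * k x y) μ := (hk.integrable_row x).const_mul C
  calc ∫ y, k x y * u y ∂μ ≤ ∫ y, (C * k x y + ε * (k x y * v y)) ∂μ := by
        refine integral_mono_of_nonneg (.of_forall fun y ↦ mul_nonneg (hk.nonneg x y) (hu y))
          (hconst.add (hv.const_mul ε)) (.of_forall fun y ↦ ?_)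
        exact (mul_le_mul_of_nonneg_left (huv y) (hk.nonneg x y)).trans_eq (by ring)
    _ = C + ε * ∫ y, k x y * v y ∂μ := by
        rw [integral_add hconst (hv.const_mul ε), integral_const_mul, integral_const_mul,
          hk.integral_row, mul_one]

lemma integral_mul_le (hk : IsDoublyStochasticKernel μ k) {u : X → ℝ} {C : ℝ}
    (hu : ∀ y, 0 ≤ u y) (huC : ∀ y, u y ≤ C) (x : X) : ∫ y, k x y * u y ∂μ ≤ C := by
  simpa using hk.integral_mul_le_add (x := x) (v := 0) (ε := 0) hu (by simp) (by simpa using huC)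

lemma integrable_uncurry_mul [SFinite μ] (hk : IsDoublyStochasticKernel μ k) {u : X → ℝ}
    (hu : Integrable u μ) : Integrable (uncurry fun x y ↦ k x y * u y) (μ.prod μ) := by
  have hmeas : AEStronglyMeasurable (uncurry fun x y ↦ k x y * u y) (μ.prod μ) :=
    hk.measurable.aestronglyMeasurable.mul hu.aestronglyMeasurable.comp_snd
  refine (integrable_prod_iff' hmeas).2
    ⟨.of_forall fun y ↦ (hk.integrable_column y).mul_const (u y), ?_⟩
  have hnorm : ∀ y, ∫ x, ‖k x y * u y‖ ∂μ = ‖u y‖ := fun y ↦ by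
    simp only [norm_mul, norm_of_nonneg (hk.nonneg _ y), integral_mul_const,
      hk.integral_column, one_mul]
  simpa only [uncurry_apply_pair, hnorm] using hu.norm

lemma integrable_integral_mul [SFinite μ] (hk : IsDoublyStochasticKernel μ k) {u : X → ℝ}
    (hu : Integrable u μ) : Integrable (fun x ↦ ∫ y, k x y * u y ∂μ) μ :=
  (hk.integrable_uncurry_mul hu).integral_prod_left

lemma integral_integral_mul [SFinite μ] (hk : IsDoublyStochasticKernel μ k) {u : X → ℝ}
    (hu : Integrable u μ) : ∫ x, ∫ y, k x y * u y ∂μ ∂μ = ∫ y, u y ∂μ := by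
  simp only [integral_integral_swap (hk.integrable_uncurry_mul hu), integral_mul_const,
    hk.integral_column, one_mul]

lemma setIntegral_integral_mul_le [SFinite μ] (hk : IsDoublyStochasticKernel μ k) {u : X → ℝ}
    {S : Set X} (hu : Integrable u μ) (hu0 : ∀ y, 0 ≤ u y) (huS : ∀ y ∉ S, u y = 0) :
    ∫ x in S, ∫ y, k x y * u y ∂μ ∂μ ≤ ∫ x in S, u x ∂μ :=
  calc ∫ x in S, ∫ y, k x y * u y ∂μ ∂μ ≤ ∫ x, ∫ y, k x y * u y ∂μ ∂μ :=
        setIntegral_le_integral (hk.integrable_integral_mul hu)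
          (.of_forall fun x ↦ integral_nonneg fun y ↦ mul_nonneg (hk.nonneg x y) (hu0 y))
    _ = ∫ x, u x ∂μ := hk.integral_integral_mul hu
    _ = ∫ x in S, u x ∂μ := (setIntegral_eq_integral_of_forall_compl_eq_zero huS).symm

end IsDoublyStochasticKernel

/-- The inflow `∫ k(x, y) u(t, y) dμ(y)` generated by the rescaled positive part `u` of `γ`. -/
noncomputable def rescaledInflow (μ : Measure X) (d : ℝ) (k : X → X → ℝ) (γ : ℝ → X → ℝ)
    (t : ℝ) (x : X) : ℝ :=
  ∫ y, k x y * rescaledPosPart d γ t y ∂μ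

lemma exp_mul_inflow_eq_rescaledInflow (t : ℝ) (x : X) :
    exp (d * t) * ∫ y, k x y * (γ t y)⁺ ∂μ = rescaledInflow μ d k γ t x := by
  simp only [rescaledInflow, rescaledPosPart, ← integral_const_mul, mul_left_comm]

namespace IsReducedSolution

lemma rescaledInflow_nonneg (h : IsReducedSolution μ d k γ) (t : ℝ) (x : X) :
    0 ≤ rescaledInflow μ d k γ t x :=
  integral_nonneg fun y ↦ mul_nonneg (h.kernel.nonneg x y) (rescaledPosPart_nonneg d γ t y)

lemma inflow_nonneg (h : IsReducedSolution μ d k γ) (t : ℝ) (x : X) :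
    0 ≤ ∫ y, k x y * (γ t y)⁺ ∂μ :=
  integral_nonneg fun y ↦ mul_nonneg (h.kernel.nonneg x y) (posPart_nonneg _)

lemma nonneg_of_le (h : IsReducedSolution μ d k γ) {s t : ℝ} (hs : 0 ≤ s) (hst : s ≤ t) {x : X}
    (hx : 0 ≤ γ s x) : 0 ≤ γ t x := by
  refine nonneg_of_hasDerivAt_nonneg_of_neg hst
    ((h.continuousOn x).mono fun r hr ↦ hs.trans hr.1)
    (fun r hr ↦ h.hasDerivAt r (hs.trans_lt hr.1) x) (fun r _ hneg ↦ ?_) hx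
  rw [posPart_of_nonpos hneg.le, mul_zero, sub_zero]
  exact mul_nonneg h.diffusivity_pos.le (h.inflow_nonneg r x)

lemma monotoneOn_setOf_nonneg (h : IsReducedSolution μ d k γ) :
    MonotoneOn (fun t ↦ {x | 0 ≤ γ t x}) (Ici 0) :=
  fun _ hs _ _ hst _ hx ↦ h.nonneg_of_le hs hst hx

lemma continuousOn_exp_mul (h : IsReducedSolution μ d k γ) (x : X) :
    ContinuousOn (fun t ↦ exp (d * t) * γ t x) (Ici 0) :=
  (by fun_prop : Continuous fun t ↦ exp (d * t)).continuousOn.mul (h.continuousOn x)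

lemma hasDerivAt_exp_mul (h : IsReducedSolution μ d k γ) {t : ℝ} (ht : 0 < t) (x : X) :
    HasDerivAt (fun s ↦ exp (d * s) * γ s x)
      (d * rescaledInflow μ d k γ t x + -(d * (exp (d * t) * (γ t x)⁻))) t := by
  have hexp : HasDerivAt (fun s ↦ exp (d * s)) (exp (d * t) * d) t := by
    simpa using ((hasDerivAt_id t).const_mul d).exp
  refine (hexp.mul (h.hasDerivAt t ht x)).congr_deriv ?_
  rw [← exp_mul_inflow_eq_rescaledInflow]
  linear_combination -(exp (d * t) * d) * posPart_sub_negPart (γ t x)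

lemma rescaledPosPart_add_le (h : IsReducedSolution μ d k γ) {s t a : ℝ} {x : X} (hs : 0 ≤ s)
    (hst : s ≤ t) (hx : 0 ≤ γ s x) (ha : ∀ r ∈ Ioo s t, a ≤ rescaledInflow μ d k γ r x) :
    rescaledPosPart d γ s x + d * a * (t - s) ≤ rescaledPosPart d γ t x := by
  have hderiv : ∀ r ∈ Ioo s t,
      HasDerivAt (fun r ↦ exp (d * r) * γ r x) (d * rescaledInflow μ d k γ r x) r := by
    intro r hr
    have hpos : 0 ≤ γ r x := h.nonneg_of_le hs hr.1.le hx
    simpa [negPart_of_nonneg hpos] using h.hasDerivAt_exp_mul (hs.trans_lt hr.1) x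
  have hslope := (convex_Icc s t).mul_sub_le_image_sub_of_le_deriv (C := d * a)
    ((h.continuousOn_exp_mul x).mono fun r hr ↦ hs.trans hr.1)
    (by
      rw [interior_Icc]
      exact fun r hr ↦ (hderiv r hr).differentiableAt.differentiableWithinAt)
    (by
      rw [interior_Icc]
      intro r hr
      rw [(hderiv r hr).deriv]
      exact mul_le_mul_of_nonneg_left (ha r hr) h.diffusivity_pos.le)
    s (left_mem_Icc.2 hst) t (right_mem_Icc.2 hst) hst
  rw [rescaledPosPart_of_nonneg hx, rescaledPosPart_of_nonneg (h.nonneg_of_le hs hst hx)]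
  linarith

lemma monotoneOn_rescaledPosPart (h : IsReducedSolution μ d k γ) (x : X) :
    MonotoneOn (fun t ↦ rescaledPosPart d γ t x) (Ici 0) := by
  intro s hs t _ hst
  rcases le_total (γ s x) 0 with hneg | hpos
  · simpa only [rescaledPosPart_of_nonpos hneg] using rescaledPosPart_nonneg d γ t x
  · simpa using h.rescaledPosPart_add_le hs hst hpos fun r _ ↦ h.rescaledInflow_nonneg r x

-- The inflow could decrease only by dropping to the junk value `0` on divergence, and a Darboux
-- function cannot jump.
lemma monotoneOn_rescaledInflow (h : IsReducedSolution μ d k γ) (x : X) :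
    MonotoneOn (fun t ↦ rescaledInflow μ d k γ t x) (Ioi 0) := by
  have hcont : ContinuousOn (fun t ↦ -(d * (exp (d * t) * (γ t x)⁻))) (Ioi 0) := by
    have := (h.continuousOn x).mono Ioi_subset_Ici_self
    simp only [negPart_def]
    fun_prop
  have hdrop : ∀ s ∈ Ioi 0, ∀ t ∈ Ioi 0, s ≤ t →
      d * rescaledInflow μ d k γ s x ≤ d * rescaledInflow μ d k γ t x ∨
        d * rescaledInflow μ d k γ t x = 0 := by
    intro s hs t ht hst
    by_cases hint : Integrable (fun y ↦ k x y * rescaledPosPart d γ t y) μ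
    · left
      have hle := h.kernel.integral_mul_le_add (C := 0) (ε := 1)
        (rescaledPosPart_nonneg d γ s) hint fun y ↦ by
          simpa using h.monotoneOn_rescaledPosPart y (mem_Ioi.1 hs).le (mem_Ioi.1 ht).le hst
      rw [zero_add, one_mul] at hle
      exact mul_le_mul_of_nonneg_left hle h.diffusivity_pos.le
    · right
      rw [rescaledInflow, integral_undef hint, mul_zero]
  have hmono := monotoneOn_of_hasDerivAt_add ordConnected_Ioi hcont
    (fun t ht ↦ h.hasDerivAt_exp_mul ht x) hdrop
  exact fun s hs t ht hst ↦ le_of_mul_le_mul_left (hmono hs ht hst) h.diffusivity_pos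

lemma rescaledInflow_le_add (h : IsReducedSolution μ d k γ) {s t C ε : ℝ} {x : X} (hs : 0 < s)
    (hst : s ≤ t) (hC : 0 ≤ C)
    (hle : ∀ y, rescaledPosPart d γ s y ≤ C + ε * rescaledPosPart d γ t y) :
    rescaledInflow μ d k γ s x ≤ C + ε * rescaledInflow μ d k γ t x := by
  by_cases hint : Integrable (fun y ↦ k x y * rescaledPosPart d γ t y) μ
  · exact h.kernel.integral_mul_le_add (rescaledPosPart_nonneg d γ s) hint hle
  · have hzero : rescaledInflow μ d k γ t x = 0 := integral_undef hint
    have hmono := h.monotoneOn_rescaledInflow x hs (hs.trans_le hst) hst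
    simp only [hzero] at hmono
    rw [hzero, mul_zero, add_zero]
    exact hmono.trans hC

lemma exp_mul_le_of_hasDerivAt (h : IsReducedSolution μ d k γ) {Q Q' : ℝ → ℝ} {t : ℝ} {x : X}
    (ht : 0 ≤ t) (hQ : ∀ r, HasDerivAt Q (Q' r) r) (h0 : γ 0 x ≤ Q 0)
    (hle : ∀ r ∈ Ioo 0 t, d * rescaledInflow μ d k γ r x ≤ Q' r) :
    exp (d * t) * γ t x ≤ Q t := by
  have hanti : AntitoneOn (fun r ↦ exp (d * r) * γ r x - Q r) (Icc 0 t) := by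
    refine antitoneOn_of_hasDerivWithinAt_nonpos (convex_Icc 0 t)
      (f' := fun r ↦ d * rescaledInflow μ d k γ r x + -(d * (exp (d * r) * (γ r x)⁻)) - Q' r)
      (((h.continuousOn_exp_mul x).mono Icc_subset_Ici_self).sub
        fun r _ ↦ (hQ r).continuousAt.continuousWithinAt) ?_ ?_ <;> rw [interior_Icc]
    · exact fun r hr ↦ ((h.hasDerivAt_exp_mul hr.1 x).sub (hQ r)).hasDerivWithinAt
    · intro r hr
      have houtflow : 0 ≤ d * (exp (d * r) * (γ r x)⁻) :=
        mul_nonneg h.diffusivity_pos.le (mul_nonneg (exp_pos _).le (negPart_nonneg _))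
      linarith [hle r hr]
  have h0t := hanti (left_mem_Icc.2 ht) (right_mem_Icc.2 ht) ht
  simp only [mul_zero, exp_zero, one_mul] at h0t
  linarith

lemma exp_mul_le_add_of_rescaledInflow_le (h : IsReducedSolution μ d k γ) {c₀ b η t : ℝ} {n : ℕ}
    {x : X} (hη : η ≠ 0) (ht : 0 ≤ t) (h0 : γ 0 x ≤ c₀)
    (hle : ∀ r ∈ Ioo 0 t,
      rescaledInflow μ d k γ r x ≤ c₀ * exp (d * r) + (r / η) ^ n / n.factorial * b) :
    exp (d * t) * γ t x ≤
      c₀ * exp (d * t) + (t / η) ^ (n + 1) / (n + 1).factorial * (d * b * η) := by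
  refine h.exp_mul_le_of_hasDerivAt ht
    (Q := fun r ↦ c₀ * exp (d * r) + (r / η) ^ (n + 1) / (n + 1).factorial * (d * b * η))
    (Q' := fun r ↦ d * (c₀ * exp (d * r) + (r / η) ^ n / n.factorial * b))
    (fun r ↦ ?_) (by simpa using h0)
    (fun r hr ↦ mul_le_mul_of_nonneg_left (hle r hr) h.diffusivity_pos.le)
  have hexp := (((hasDerivAt_id r).const_mul d).exp).const_mul c₀
  have hpow := ((hasDerivAt_pow_succ_div_factorial n (r / η)).comp r
    ((hasDerivAt_id r).div_const η)).mul_const (d * b * η)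
  refine (hexp.add hpow).congr_deriv ?_
  simp only [id]
  field_simp

lemma mul_rescaledInflow_le_rescaledPosPart_add (h : IsReducedSolution μ d k γ) {t η : ℝ} {x : X}
    (ht : 0 < t) (hη : 0 ≤ η) (hx : 0 ≤ γ t x) :
    d * rescaledInflow μ d k γ t x * η ≤ rescaledPosPart d γ (t + η) x := by
  have hgrowth := h.rescaledPosPart_add_le ht.le (le_add_of_nonneg_right hη) hx fun r hr ↦
    h.monotoneOn_rescaledInflow x ht (ht.trans hr.1) hr.1.le
  rw [add_sub_cancel_left] at hgrowth
  exact (le_add_of_nonneg_left (rescaledPosPart_nonneg d γ t x)).trans hgrowth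

-- With no a priori bound on `γ` available, each step trades the inflow at `x` for the value of the
-- solution at `x` a time `η` later.
lemma rescaledPosPart_le_iterate (h : IsReducedSolution μ d k γ) {c₀ T η : ℝ} (hc₀ : 0 ≤ c₀)
    (h0 : ∀ x, γ 0 x ≤ c₀) (hT : 0 < T) (hη : 0 < η) (n : ℕ) : ∀ t ∈ Icc 0 T, ∀ x,
    rescaledPosPart d γ t x ≤
      c₀ * exp (d * t) + (t / η) ^ n / n.factorial * rescaledPosPart d γ (T + n * η) x := by
  induction n with
  | zero =>
    intro t ht x
    have hmono := h.monotoneOn_rescaledPosPart x ht.1 hT.le ht.2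
    have hpos : 0 ≤ c₀ * exp (d * t) := by positivity
    simpa using hmono.trans (le_add_of_nonneg_left hpos)
  | succ n ih =>
    intro t ht x
    have ht0 : 0 ≤ t := ht.1
    rcases lt_or_ge (γ t x) 0 with hneg | hpos
    · rw [rescaledPosPart_of_nonpos hneg.le]
      have := rescaledPosPart_nonneg d γ (T + (n + 1 : ℕ) * η) x
      positivity
    set τ := T + n * η
    have hTτ : T ≤ τ := le_add_of_nonneg_right (by positivity)
    have hstep : T + (n + 1 : ℕ) * η = τ + η := by push_cast; ring
    have hgrowth := h.mul_rescaledInflow_le_rescaledPosPart_add (hT.trans_le hTτ) hη.le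
      (h.nonneg_of_le ht0 (ht.2.trans hTτ) hpos)
    have hcompare := h.exp_mul_le_add_of_rescaledInflow_le (b := rescaledInflow μ d k γ τ x)
      (n := n) hη.ne' ht0 (h0 x) fun r hr ↦
        have hrT : r ≤ T := hr.2.le.trans ht.2
        h.rescaledInflow_le_add hr.1 (hrT.trans hTτ) (by positivity) (ih r ⟨hr.1.le, hrT⟩)
    rw [hstep, rescaledPosPart_of_nonneg hpos]
    exact hcompare.trans (by gcongr)

lemma le_of_initial_le (h : IsReducedSolution μ d k γ) {c₀ t : ℝ} (hc₀ : 0 ≤ c₀)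
    (h0 : ∀ x, γ 0 x ≤ c₀) (ht : 0 ≤ t) (x : X) : γ t x ≤ c₀ := by
  rcases ht.eq_or_lt with rfl | ht
  · exact h0 x
  set τ := 2 * exp 1 * t with hτ
  have hτpos : 0 < τ := by positivity
  have hbound : ∀ᶠ n : ℕ in atTop, rescaledPosPart d γ t x ≤
      c₀ * exp (d * t) + (1 / 2) ^ n * rescaledPosPart d γ (t + τ) x := by
    filter_upwards [eventually_gt_atTop 0] with n hn
    have hn0 : (0 : ℝ) < n := Nat.cast_pos.2 hn
    have hiter := h.rescaledPosPart_le_iterate hc₀ h0 ht (div_pos hτpos hn0) n t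
      (right_mem_Icc.2 ht.le) x
    rw [mul_div_cancel₀ τ hn0.ne'] at hiter
    have hcoeff : (t / (τ / n)) ^ n / n.factorial ≤ (1 / 2) ^ n := by
      have hratio : exp 1 * (t / τ) = 1 / 2 := by rw [hτ]; field_simp
      calc (t / (τ / n)) ^ n / n.factorial = (n * (t / τ)) ^ n / n.factorial := by
            rw [div_div_eq_mul_div, mul_comm t, mul_div_assoc]
        _ ≤ (1 / 2) ^ n := hratio ▸ natCast_mul_pow_div_factorial_le n (by positivity)
    exact hiter.trans (by gcongr; exact rescaledPosPart_nonneg ..)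
  have hlimit : Tendsto (fun n : ℕ ↦
      c₀ * exp (d * t) + (1 / 2) ^ n * rescaledPosPart d γ (t + τ) x) atTop
      (nhds (c₀ * exp (d * t))) := by
    simpa using ((tendsto_pow_atTop_nhds_zero_of_lt_one (r := (1 / 2 : ℝ)) (by norm_num)
      (by norm_num)).mul_const (rescaledPosPart d γ (t + τ) x)).const_add (c₀ * exp (d * t))
  have hle : exp (d * t) * (γ t x)⁺ ≤ exp (d * t) * c₀ :=
    (ge_of_tendsto hlimit hbound).trans_eq (mul_comm ..)
  exact (le_posPart _).trans (le_of_mul_le_mul_left hle (exp_pos _))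

lemma inflow_le (h : IsReducedSolution μ d k γ) {c₀ t : ℝ} (hc₀ : 0 ≤ c₀) (h0 : ∀ x, γ 0 x ≤ c₀)
    (ht : 0 ≤ t) (x : X) : ∫ y, k x y * (γ t y)⁺ ∂μ ≤ c₀ :=
  h.kernel.integral_mul_le (fun _ ↦ posPart_nonneg _)
    (fun y ↦ sup_le (h.le_of_initial_le hc₀ h0 ht y) hc₀) x

lemma abs_flux_le (h : IsReducedSolution μ d k γ) {c₀ t : ℝ} (hc₀ : 0 ≤ c₀)
    (h0 : ∀ x, γ 0 x ≤ c₀) (ht : 0 ≤ t) (x : X) :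
    |d * (∫ y, k x y * (γ t y)⁺ ∂μ) - d * (γ t x)⁺| ≤ d * c₀ := by
  rw [← mul_sub, abs_mul, abs_of_pos h.diffusivity_pos]
  exact mul_le_mul_of_nonneg_left (abs_sub_le_of_nonneg_of_le (h.inflow_nonneg t x)
    (h.inflow_le hc₀ h0 ht x) (posPart_nonneg _) (sup_le (h.le_of_initial_le hc₀ h0 ht x) hc₀))
    h.diffusivity_pos.le

lemma neg_mul_le_initial (h : IsReducedSolution μ d k γ) {c₀ T : ℝ} (hc₀ : 0 ≤ c₀)
    (h0 : ∀ x, γ 0 x ≤ c₀) (hT : 0 ≤ T) {x : X} (hx : 0 ≤ γ T x) : -(d * c₀ * T) ≤ γ 0 x := by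
  have hlip := abs_sub_le_of_abs_hasDerivAt_le hT ((h.continuousOn x).mono Icc_subset_Ici_self)
    (fun t ht ↦ h.hasDerivAt t ht.1 x) fun t ht ↦ h.abs_flux_le hc₀ h0 ht.1.le x
  rw [sub_zero] at hlip
  linarith [(abs_le.1 hlip).2]

lemma measurableSet_nonneg (h : IsReducedSolution μ d k γ) (t : ℝ) :
    MeasurableSet {x | 0 ≤ γ t x} :=
  measurableSet_le measurable_const (h.measurable t)

variable [IsFiniteMeasure μ]

lemma integrable_posPart (h : IsReducedSolution μ d k γ) {c₀ t : ℝ} (hc₀ : 0 ≤ c₀)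
    (h0 : ∀ x, γ 0 x ≤ c₀) (ht : 0 ≤ t) : Integrable (fun x ↦ (γ t x)⁺) μ :=
  .of_mem_Icc 0 c₀ ((h.measurable t).sup_const 0).aemeasurable
    (.of_forall fun x ↦ ⟨posPart_nonneg _, sup_le (h.le_of_initial_le hc₀ h0 ht x) hc₀⟩)

lemma integrable_flux (h : IsReducedSolution μ d k γ) {c₀ t : ℝ} (hc₀ : 0 ≤ c₀)
    (h0 : ∀ x, γ 0 x ≤ c₀) (ht : 0 ≤ t) :
    Integrable (fun x ↦ d * (∫ y, k x y * (γ t y)⁺ ∂μ) - d * (γ t x)⁺) μ :=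
  have hint := h.integrable_posPart hc₀ h0 ht
  ((h.kernel.integrable_integral_mul hint).const_mul d).sub (hint.const_mul d)

lemma setIntegral_flux_nonpos (h : IsReducedSolution μ d k γ) {c₀ t : ℝ} {S : Set X}
    (hc₀ : 0 ≤ c₀) (h0 : ∀ x, γ 0 x ≤ c₀) (ht : 0 ≤ t) (hS : {x | 0 ≤ γ t x} ⊆ S) :
    ∫ x in S, d * (∫ y, k x y * (γ t y)⁺ ∂μ) - d * (γ t x)⁺ ∂μ ≤ 0 := by
  have hint := h.integrable_posPart hc₀ h0 ht
  rw [integral_sub ((h.kernel.integrable_integral_mul hint).const_mul d).restrict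
    (hint.const_mul d).restrict, integral_const_mul, integral_const_mul, ← mul_sub]
  refine mul_nonpos_of_nonneg_of_nonpos h.diffusivity_pos.le (sub_nonpos.2 ?_)
  exact h.kernel.setIntegral_integral_mul_le hint (fun _ ↦ posPart_nonneg _)
    fun y hy ↦ posPart_of_nonpos (not_le.1 fun hpos ↦ hy (hS hpos)).le

lemma integrableOn_nonneg (h : IsReducedSolution μ d k γ) {c₀ T : ℝ} (hc₀ : 0 ≤ c₀)
    (h0 : ∀ x, γ 0 x ≤ c₀) (hT : 0 ≤ T) : IntegrableOn (γ T) {x | 0 ≤ γ T x} μ :=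
  .of_mem_Icc 0 c₀ (h.measurable T).aemeasurable
    ((ae_restrict_mem (h.measurableSet_nonneg T)).mono fun x hx ↦
      ⟨hx, h.le_of_initial_le hc₀ h0 hT x⟩)

lemma integrableOn_initial (h : IsReducedSolution μ d k γ) {c₀ T : ℝ} (hc₀ : 0 ≤ c₀)
    (h0 : ∀ x, γ 0 x ≤ c₀) (hT : 0 ≤ T) : IntegrableOn (γ 0) {x | 0 ≤ γ T x} μ :=
  .of_mem_Icc (-(d * c₀ * T)) c₀ (h.measurable 0).aemeasurable
    ((ae_restrict_mem (h.measurableSet_nonneg T)).mono fun x hx ↦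
      ⟨h.neg_mul_le_initial hc₀ h0 hT hx, h0 x⟩)

lemma setIntegral_initial_nonneg (h : IsReducedSolution μ d k γ) {c₀ T : ℝ} (hc₀ : 0 ≤ c₀)
    (h0 : ∀ x, γ 0 x ≤ c₀) (hT : 0 ≤ T) : 0 ≤ ∫ x in {x | 0 ≤ γ T x}, γ 0 x ∂μ := by
  have hS := h.measurableSet_nonneg T
  calc 0 ≤ ∫ x in {x | 0 ≤ γ T x}, γ T x ∂μ := setIntegral_nonneg hS fun _ hx ↦ hx
    _ ≤ ∫ x in {x | 0 ≤ γ T x}, γ 0 x ∂μ :=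
      integral_le_integral_of_integral_hasDerivAt_nonpos hT
        (fun t ↦ (h.measurable t).aestronglyMeasurable) (h.integrableOn_nonneg hc₀ h0 hT)
        (fun x ↦ (h.continuousOn x).mono Icc_subset_Ici_self)
        (fun t ht x ↦ h.hasDerivAt t ht.1 x)
        (fun t ht ↦ (h.integrable_flux hc₀ h0 ht.1.le).aestronglyMeasurable.restrict)
        (.of_forall fun x t ht ↦ h.abs_flux_le hc₀ h0 ht.1.le x)
        (fun t ht ↦ h.setIntegral_flux_nonpos hc₀ h0 ht.1.le
          fun x hx ↦ h.nonneg_of_le ht.1.le ht.2.le hx)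

lemma measure_nonneg_sdiff_le (h : IsReducedSolution μ d k γ) {c₀ ℓ₀ T : ℝ} (hc₀ : 0 ≤ c₀)
    (hℓ₀ : 0 < ℓ₀) (h0 : ∀ x, γ 0 x ≤ c₀) (hgap : ∀ x, γ 0 x < 0 → γ 0 x ≤ -ℓ₀) (hT : 0 ≤ T) :
    μ ({x | 0 ≤ γ T x} \ {x | 0 ≤ γ 0 x}) ≤
      ENNReal.ofReal (c₀ / ℓ₀) * μ {x | 0 ≤ γ 0 x} := by
  set S := {x | 0 ≤ γ T x}
  set A := {x | 0 ≤ γ 0 x}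
  have hA : MeasurableSet A := h.measurableSet_nonneg 0
  have hSA : MeasurableSet (S \ A) := (h.measurableSet_nonneg T).diff hA
  have hAS : A ⊆ S := h.monotoneOn_setOf_nonneg self_mem_Ici hT hT
  have hint : IntegrableOn (γ 0) S μ := h.integrableOn_initial hc₀ h0 hT
  have hinside : ∫ x in A, γ 0 x ∂μ ≤ μ.real A * c₀ := by
    simpa using setIntegral_mono_on (hint.mono_set hAS) integrableOn_const hA fun x _ ↦ h0 x
  have houtside : ∫ x in S \ A, γ 0 x ∂μ ≤ μ.real (S \ A) * -ℓ₀ := by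
    simpa using setIntegral_mono_on (hint.mono_set sdiff_subset) integrableOn_const hSA
      fun x hx ↦ hgap x (not_le.1 hx.2)
  have hmass := h.setIntegral_initial_nonneg hc₀ h0 hT
  have hbalance : μ.real (S \ A) ≤ c₀ / ℓ₀ * μ.real A := by
    have hsplit := integral_inter_add_sdiff hA hint
    rw [inter_eq_self_of_subset_right hAS] at hsplit
    rw [div_mul_eq_mul_div, le_div_iff₀ hℓ₀]
    linarith
  rw [← ofReal_measureReal, ← ofReal_measureReal (s := A), ← ENNReal.ofReal_mul (by positivity)]
  exact ENNReal.ofReal_le_ofReal hbalance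

lemma measure_exists_nonneg_sdiff_le (h : IsReducedSolution μ d k γ) {c₀ ℓ₀ : ℝ} (hc₀ : 0 ≤ c₀)
    (hℓ₀ : 0 < ℓ₀) (h0 : ∀ x, γ 0 x ≤ c₀) (hgap : ∀ x, γ 0 x < 0 → γ 0 x ≤ -ℓ₀) :
    μ ({x | ∃ t ≥ 0, 0 ≤ γ t x} \ {x | 0 ≤ γ 0 x}) ≤
      ENNReal.ofReal (c₀ / ℓ₀) * μ {x | 0 ≤ γ 0 x} := by
  have hunion : {x | ∃ t ≥ 0, 0 ≤ γ t x} \ {x | 0 ≤ γ 0 x} =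
      ⋃ n : ℕ, {x | 0 ≤ γ n x} \ {x | 0 ≤ γ 0 x} := by
    rw [← iUnion_sdiff]
    congr 1
    ext x
    simp only [mem_ofPred_eq, mem_iUnion]
    refine ⟨fun ⟨t, ht, hx⟩ ↦ ?_, fun ⟨n, hx⟩ ↦ ⟨n, n.cast_nonneg, hx⟩⟩
    obtain ⟨n, hn⟩ := exists_nat_ge t
    exact ⟨n, h.nonneg_of_le ht hn hx⟩
  have hmono : Monotone fun n : ℕ ↦ {x | 0 ≤ γ n x} \ {x | 0 ≤ γ 0 x} := fun m n hmn ↦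
    sdiff_subset_sdiff_left <|
      h.monotoneOn_setOf_nonneg (mem_Ici.2 m.cast_nonneg) (mem_Ici.2 n.cast_nonneg)
        (Nat.cast_le.2 hmn)
  rw [hunion, hmono.measure_iUnion]
  exact iSup_le fun n ↦ h.measure_nonneg_sdiff_le hc₀ hℓ₀ h0 hgap n.cast_nonneg

end IsReducedSolution

theorem stmt_14_general [IsFiniteMeasure μ] (h : IsReducedSolution μ d k γ) {c₀ ℓ₀ : ℝ}
    (hc₀ : 0 ≤ c₀) (hℓ₀ : 0 < ℓ₀) (h0 : ∀ x, γ 0 x ≤ c₀)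
    (hgap : ∀ x, γ 0 x < 0 → γ 0 x ≤ -ℓ₀) :
    (∀ T > 0, μ ({x | 0 ≤ γ T x} \ {x | 0 ≤ γ 0 x}) ≤
      ENNReal.ofReal (c₀ / ℓ₀) * μ {x | 0 ≤ γ 0 x}) ∧
    (ENNReal.ofReal (c₀ / ℓ₀) * μ {x | 0 ≤ γ 0 x} < μ {x | γ 0 x < 0} →
      μ {x | ∃ t ≥ 0, 0 ≤ γ t x} < μ univ) := by
  refine ⟨fun T hT ↦ h.measure_nonneg_sdiff_le hc₀ hℓ₀ h0 hgap hT.le, fun hlt ↦ ?_⟩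
  have hA := h.measurableSet_nonneg 0
  have hcompl : {x | 0 ≤ γ 0 x}ᶜ = {x | γ 0 x < 0} := by ext; simp
  have hgrow := h.measure_exists_nonneg_sdiff_le hc₀ hℓ₀ h0 hgap
  have hunion : {x | ∃ t ≥ 0, 0 ≤ γ t x} ⊆
      {x | 0 ≤ γ 0 x} ∪ ({x | ∃ t ≥ 0, 0 ≤ γ t x} \ {x | 0 ≤ γ 0 x}) := by
    rw [union_sdiff_self]
    exact subset_union_right
  calc μ {x | ∃ t ≥ 0, 0 ≤ γ t x}
      ≤ μ {x | 0 ≤ γ 0 x} + μ ({x | ∃ t ≥ 0, 0 ≤ γ t x} \ {x | 0 ≤ γ 0 x}) :=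
        (measure_mono hunion).trans (measure_union_le _ _)
    _ < μ {x | 0 ≤ γ 0 x} + μ {x | γ 0 x < 0} :=
        ENNReal.add_lt_add_left (measure_ne_top _ _) (hgrow.trans_lt hlt)
    _ = μ univ := by rw [← hcompl, measure_add_measure_compl hA]

end

lemma isDoublyStochasticKernel_of_periodic {κ : ℝ → ℝ} {P : ℝ} (hP : 0 ≤ P)
    (hκ0 : ∀ x, 0 ≤ κ x) (hκm : Measurable κ) (hκ : Periodic κ P) (hκ1 : ∫ x in Ioo 0 P, κ x = 1) :
    IsDoublyStochasticKernel (volume.restrict (Ioo 0 P)) fun x y ↦ κ (x - y) := by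
  have hperiod : ∀ f : ℝ → ℝ, ∫ x in Ioo 0 P, f x = ∫ x in 0..P, f x := fun f ↦ by
    rw [intervalIntegral.integral_of_le hP, integral_Ioc_eq_integral_Ioo]
  rw [hperiod] at hκ1
  refine ⟨fun _ _ ↦ hκ0 _, hκm.comp measurable_sub, fun x ↦ ?_, fun y ↦ ?_⟩
  · rw [hperiod, intervalIntegral.integral_comp_sub_left κ x, ← hκ1]
    simpa using hκ.intervalIntegral_add_eq (x - P) 0
  · rw [hperiod, intervalIntegral.integral_comp_sub_right κ y, ← hκ1]
    simpa [sub_eq_neg_add] using hκ.intervalIntegral_add_eq (0 - y) 0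

section StepProfile

variable {f : ℝ → ℝ} {a b M L : ℝ}

lemma eq_or_eq_of_periodic_step (hM : 0 ≤ M) (hL : 0 < L) (hf : Periodic f (M + L))
    (ha : ∀ x ∈ Icc 0 M, f x = a) (hb : ∀ x ∈ Ioo M (M + L), f x = b) (x : ℝ) :
    f x = a ∨ f x = b := by
  obtain ⟨y, hy, hxy⟩ := hf.exists_mem_Ico₀ (by positivity) x
  rw [hxy]
  exact (le_or_gt y M).imp (fun h ↦ ha y ⟨hy.1, h⟩) fun h ↦ hb y ⟨h, hy.2⟩

lemma setOf_nonneg_inter_Ioo_of_step (hL : 0 < L) (ha0 : 0 ≤ a) (hb0 : b < 0)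
    (ha : ∀ x ∈ Icc 0 M, f x = a) (hb : ∀ x ∈ Ioo M (M + L), f x = b) :
    {x | 0 ≤ f x} ∩ Ioo 0 (M + L) = Ioc 0 M := by
  ext x
  constructor
  · rintro ⟨hx, hx0, hxP⟩
    refine ⟨hx0, not_lt.1 fun hMx ↦ ?_⟩
    exact hb0.not_ge (hb x ⟨hMx, hxP⟩ ▸ hx)
  · rintro ⟨hx0, hxM⟩
    exact ⟨ha0.trans_eq (ha x ⟨hx0.le, hxM⟩).symm, hx0, by linarith⟩

lemma setOf_neg_inter_Ioo_of_step (hM : 0 ≤ M) (ha0 : 0 ≤ a) (hb0 : b < 0)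
    (ha : ∀ x ∈ Icc 0 M, f x = a) (hb : ∀ x ∈ Ioo M (M + L), f x = b) :
    {x | f x < 0} ∩ Ioo 0 (M + L) = Ioo M (M + L) := by
  ext x
  constructor
  · rintro ⟨hx, hx0, hxP⟩
    refine ⟨not_le.1 fun hxM ↦ ?_, hxP⟩
    exact ha0.not_gt (ha x ⟨hx0.le, hxM⟩ ▸ hx)
  · exact fun hx ↦ ⟨(hb x hx).trans_lt hb0, hM.trans_lt hx.1, hx.2⟩

end StepProfile

/-- Measure bound for the positivity set of the 1-D periodic reduced
problem: the part of the positivity set in `(M, M+L)` has measure at most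
`(c₀/ℓ₀) M`; if `L > (c₀/ℓ₀) M` the total positivity set does not fill
the period interval. -/
theorem stmt_14 (d c₀ ℓ₀ M L : ℝ)
    (hd : 0 < d) (hc₀ : 0 < c₀) (hℓ₀ : 0 < ℓ₀) (hM : 0 < M) (hL : 0 < L)
    (kst : ℝ → ℝ) (hkst_nonneg : ∀ x, 0 ≤ kst x)
    (hkst_meas : Measurable kst)
    (hkst_per : Function.Periodic kst (M + L))
    (hkst_int : ∫ x in Set.Ioo (0:ℝ) (M + L), kst x = 1)
    (γ : ℝ → ℝ → ℝ)
    (hγ_cont : ∀ x, ContinuousOn (fun t => γ t x) (Set.Ici 0))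
    (hγ_meas : ∀ t, Measurable (γ t))
    (hγ_per : ∀ t x, γ t (x + (M + L)) = γ t x)
    (hpde : ∀ t > (0:ℝ), ∀ x, HasDerivAt (fun s => γ s x)
        (d * (∫ y in Set.Ioo (0:ℝ) (M + L), kst (x - y) * max (γ t y) 0)
          - d * max (γ t x) 0) t)
    (hinit_in : ∀ x ∈ Set.Icc (0:ℝ) M, γ 0 x = c₀)
    (hinit_out : ∀ x ∈ Set.Ioo M (M + L), γ 0 x = -ℓ₀) :
    (∀ T > (0:ℝ),
      volume ({x | 0 ≤ γ T x} ∩ Set.Ioo M (M + L)) ≤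
        ENNReal.ofReal ((c₀ / ℓ₀) * M)) ∧
    (L > (c₀ / ℓ₀) * M →
      volume ({x | ∃ t ≥ (0:ℝ), 0 ≤ γ t x} ∩ Set.Ioo 0 (M + L)) <
        ENNReal.ofReal (M + L)) := by
  have hsol : IsReducedSolution (volume.restrict (Ioo 0 (M + L))) d (fun x y ↦ kst (x - y)) γ :=
    ⟨hd, isDoublyStochasticKernel_of_periodic (by positivity) hkst_nonneg hkst_meas hkst_per
      hkst_int, hγ_cont, hγ_meas, hpde⟩
  have hstep := eq_or_eq_of_periodic_step hM.le hL (hγ_per 0) hinit_in hinit_out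
  have hmeasure : ∀ S, volume.restrict (Ioo 0 (M + L)) S = volume (S ∩ Ioo 0 (M + L)) :=
    fun S ↦ Measure.restrict_apply' measurableSet_Ioo
  have hnonneg := setOf_nonneg_inter_Ioo_of_step hL hc₀.le (neg_lt_zero.2 hℓ₀) hinit_in hinit_out
  have hneg := setOf_neg_inter_Ioo_of_step hM.le hc₀.le (neg_lt_zero.2 hℓ₀) hinit_in hinit_out
  obtain ⟨hgrowth, htotal⟩ := stmt_14_general hsol hc₀.le hℓ₀
    (fun x ↦ by rcases hstep x with h | h <;> linarith)
    fun x _ ↦ by rcases hstep x with h | h <;> linarith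
  simp only [hmeasure, hnonneg, hneg, univ_inter, Real.volume_Ioc, Real.volume_Ioo, sub_zero,
    add_sub_cancel_left, ← ENNReal.ofReal_mul (div_pos hc₀ hℓ₀).le] at hgrowth htotal
  refine ⟨fun T hT ↦ (measure_mono ?_).trans (hgrowth T hT),
    fun hlt ↦ htotal ((ENNReal.ofReal_lt_ofReal_iff hL).2 hlt)⟩
  rw [← hneg]
  exact fun x hx ↦ ⟨⟨hx.1, fun hx0 : 0 ≤ γ 0 x ↦ hx0.not_gt hx.2.1⟩, hx.2.2⟩
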